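/- Let σ ≥ 0, m > 0, and let ν be a σ-finite Borel measure on ℝ concentrated on (−∞,0) with ∫_{(−∞,0)} min(z², |z|) ν(dz) < ∞. Assume: (a) either σ > 0 or liminf_{x ↓ 0} x^{s−2} ∫_{(−x,0)} z² ν(dz) > 0 for some s ∈ (0,2); (b) there exists λ₋ < 0 such that ∫_{(−∞,−1)} e^{λz} ν(dz) < ∞ for all λ ∈ (λ₋, 0); and (c) the function Ψ(λ) := σ²λ²/2 + mλ + ∫_{(−∞,0)} (e^{λz} − 1 − λz) ν(dz) satisfies Ψ'(λ₀) < 0 for some λ₀ ∈ (λ₋, 0), so that there is a unique λ_* ∈ (λ₋, 0) with Ψ'(λ_*) = 0. Set d² := σ² + ∫_{(−∞,0)} z² e^{λ_* z} ν(dz) and, for λ ∈ ℝ, Ψ(iλ) := −σ²λ²/2 + imλ + ∫_{(−∞,0)} (e^{iλz} − 1 − iλz) ν(dz). Then for every b ∈ ℝ, the Fourier-inversion density p(t,b) := (1/(2π)) ∫_ℝ e^{−ibλ} exp(tΨ(iλ)) dλ is well defined for all sufficiently large t and satisfies p(t,b) · √(2π d² t) · e^{λ_* b − Ψ(λ_*)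 t} → 1 as t → ∞. -/

import Mathlib

open Filter MeasureTheory Set

/-- The Laplace (cumulant) exponent `Ψ(λ)` of a spectrally negative Lévy process with
Gaussian coefficient `σ`, drift `m` and Lévy measure `ν`. -/
noncomputable def cumulant (σ m : ℝ) (ν : MeasureTheory.Measure ℝ) (lam : ℝ) : ℝ :=
  σ ^ 2 * lam ^ 2 / 2 + m * lam +
    ∫ z in Iio (0 : ℝ), (Real.exp (lam * z) - 1 - lam * z) ∂ν

/-- The characteristic exponent `Ψ(iλ)` of the same process. -/
noncomputable def charExponent (σ m : ℝ) (ν : MeasureTheory.Measure ℝ) (lam : ℝ) : ℂ :=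
  ((-(σ ^ 2 * lam ^ 2) / 2 : ℝ) : ℂ) + Complex.I * m * lam +
    ∫ z in Iio (0 : ℝ),
      (Complex.exp (Complex.I * lam * z) - 1 - Complex.I * lam * z) ∂ν

/-- The Fourier-inversion density of `X_t` at `b`. -/
noncomputable def fourierDensity (σ m : ℝ) (ν : MeasureTheory.Measure ℝ) (t b : ℝ) : ℂ :=
  ((1 / (2 * Real.pi) : ℝ) : ℂ) *
    ∫ lam : ℝ, Complex.exp (-(Complex.I) * b * lam) *
      Complex.exp ((t : ℂ) * charExponent σ m ν lam)

theorem aux_exp1 (u : ℂ) (M : ℝ) (hM0 : 0 ≤ M) (hM : u.re ≤ M) :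
    ‖Complex.exp u - 1‖ ≤ Real.exp M * ‖u‖ := by
  have hs : Convex ℝ {v : ℂ | v.re ≤ M} := convex_halfSpace_re_le M
  have := hs.norm_image_sub_le_of_norm_hasDerivWithin_le (f := Complex.exp) (f' := Complex.exp)
    (C := Real.exp M) (x := 0) (y := u)
    (fun x _ => (Complex.hasDerivAt_exp x).hasDerivWithinAt)
    (fun x hx => by rw [Complex.norm_exp]; exact Real.exp_le_exp.2 hx) (by simpa using hM0) hM
  simpa using this

theorem aux_exp2 (u : ℂ) (M : ℝ) (hM0 : 0 ≤ M) (hM : u.re ≤ M) :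
    ‖Complex.exp u - 1 - u‖ ≤ Real.exp M * ‖u‖ ^ 2 := by
  have hs : Convex ℝ ({v : ℂ | v.re ≤ M} ∩ Metric.closedBall 0 ‖u‖) :=
    (convex_halfSpace_re_le M).inter (convex_closedBall _ _)
  have := hs.norm_image_sub_le_of_norm_hasDerivWithin_le
    (f := fun v => Complex.exp v - 1 - v) (f' := fun v => Complex.exp v - 1)
    (C := Real.exp M * ‖u‖) (x := 0) (y := u)
    (fun x _ => (((Complex.hasDerivAt_exp x).sub_const 1).sub (hasDerivAt_id x)).hasDerivWithinAt)
    (fun x hx => (aux_exp1 x M hM0 hx.1).trans (by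
      have : ‖x‖ ≤ ‖u‖ := by simpa using hx.2
      gcongr)) (by simpa using hM0) ⟨hM, by simp⟩
  simpa [pow_two, mul_assoc] using this

theorem aux_re (w : ℂ) (z L : ℝ) (hz : z < 0) (hL : L ≤ w.re) : (w * z).re ≤ L * z := by
  simp; nlinarith

theorem aux_K (w : ℂ) (z L : ℝ) (hz : z < 0) (hL0 : L ≤ 0) (hL : L ≤ w.re) :
    ‖Complex.exp (w * z) - 1 - w * z‖ ≤ ‖w‖ ^ 2 * (z ^ 2 * Real.exp (L * z)) := by
  have := aux_exp2 (w * z) (L * z) (by nlinarith) (aux_re w z L hz hL)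
  rw [norm_mul, mul_pow, Complex.norm_real, Real.norm_eq_abs, sq_abs] at this
  linarith

theorem aux_K' (w : ℂ) (z L : ℝ) (hz : z < 0) (hL0 : L ≤ 0) (hL : L ≤ w.re) :
    ‖(z : ℂ) * (Complex.exp (w * z) - 1)‖ ≤ ‖w‖ * (z ^ 2 * Real.exp (L * z)) := by
  have := aux_exp1 (w * z) (L * z) (by nlinarith) (aux_re w z L hz hL)
  rw [norm_mul, Complex.norm_real, Real.norm_eq_abs] at this
  rw [norm_mul, Complex.norm_real, Real.norm_eq_abs, ← sq_abs z]
  nlinarith [mul_le_mul_of_nonneg_left this (abs_nonneg z)]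

/-- complex cumulant -/
noncomputable def PsiC (σ m : ℝ) (μ : Measure ℝ) (w : ℂ) : ℂ :=
  (σ : ℂ) ^ 2 * w ^ 2 / 2 + m * w + ∫ z : ℝ, (Complex.exp (w * z) - 1 - w * z) ∂μ

/-- its derivative -/
noncomputable def PsiC' (σ m : ℝ) (μ : Measure ℝ) (w : ℂ) : ℂ :=
  (σ : ℂ) ^ 2 * w + m + ∫ z : ℝ, (z : ℂ) * (Complex.exp (w * z) - 1) ∂μ

theorem K_meas (μ : Measure ℝ) (w : ℂ) :
    AEStronglyMeasurable (fun z : ℝ => Complex.exp (w * z) - 1 - w * z) μ :=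
  (by fun_prop : Continuous (fun z : ℝ => Complex.exp (w * z) - 1 - w * z)).aestronglyMeasurable

theorem K'_meas (μ : Measure ℝ) (w : ℂ) :
    AEStronglyMeasurable (fun z : ℝ => (z : ℂ) * (Complex.exp (w * z) - 1)) μ :=
  (by fun_prop : Continuous (fun z : ℝ => (z : ℂ) * (Complex.exp (w * z) - 1))).aestronglyMeasurable

theorem K_int (μ : Measure ℝ) (hneg : ∀ᵐ z ∂μ, z < 0) (L : ℝ) (hL0 : L ≤ 0)
    (hH : Integrable (fun z => z ^ 2 * Real.exp (L * z)) μ) (w : ℂ) (hw : L ≤ w.re) :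
    Integrable (fun z : ℝ => Complex.exp (w * z) - 1 - w * z) μ := by
  refine (hH.const_mul (‖w‖ ^ 2)).mono' (K_meas μ w) ?_
  filter_upwards [hneg] with z hz using aux_K w z L hz hL0 hw

theorem K'_int (μ : Measure ℝ) (hneg : ∀ᵐ z ∂μ, z < 0) (L : ℝ) (hL0 : L ≤ 0)
    (hH : Integrable (fun z => z ^ 2 * Real.exp (L * z)) μ) (w : ℂ) (hw : L ≤ w.re) :
    Integrable (fun z : ℝ => (z : ℂ) * (Complex.exp (w * z) - 1)) μ := by
  refine (hH.const_mul (‖w‖)).mono' (K'_meas μ w) ?_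
  filter_upwards [hneg] with z hz using aux_K' w z L hz hL0 hw

theorem PsiC_cont (σ m : ℝ) (μ : Measure ℝ) (hneg : ∀ᵐ z ∂μ, z < 0) (L : ℝ) (hL0 : L ≤ 0)
    (hH : Integrable (fun z => z ^ 2 * Real.exp (L * z)) μ) :
    ContinuousOn (PsiC σ m μ) {w | L ≤ w.re} := by
  have key : ∀ R : ℝ, ContinuousOn (fun w : ℂ => ∫ z : ℝ, (Complex.exp (w * z) - 1 - w * z) ∂μ)
      ({w | L ≤ w.re} ∩ Metric.ball 0 R) := by
    intro R
    refine continuousOn_of_dominated (bound := fun z => R ^ 2 * (z ^ 2 * Real.exp (L * z)))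
      (fun w _ => K_meas μ w) ?_ (hH.const_mul _) ?_
    · intro w hw
      filter_upwards [hneg] with z hz
      refine (aux_K w z L hz hL0 hw.1).trans ?_
      have : ‖w‖ ≤ R := by simpa using (Metric.mem_ball.1 hw.2).le
      gcongr
    · exact Eventually.of_forall fun z => by fun_prop
  have key2 : ContinuousOn (fun w : ℂ => ∫ z : ℝ, (Complex.exp (w * z) - 1 - w * z) ∂μ)
      {w | L ≤ w.re} := by
    intro w hw
    have h1 := key (‖w‖ + 1) w ⟨hw, by simp⟩
    refine (continuousWithinAt_inter (Metric.isOpen_ball.mem_nhds ?_)).1 h1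
    simp
  unfold PsiC
  exact ContinuousOn.add (by fun_prop) key2

theorem PsiC_deriv (σ m : ℝ) (μ : Measure ℝ) (hneg : ∀ᵐ z ∂μ, z < 0) (L : ℝ) (hL0 : L ≤ 0)
    (hH : Integrable (fun z => z ^ 2 * Real.exp (L * z)) μ) (w : ℂ) (hw : L < w.re) :
    HasDerivAt (PsiC σ m μ) (PsiC' σ m μ w) w := by
  have hopen : IsOpen ({v : ℂ | L < v.re} ∩ Metric.ball 0 (‖w‖ + 1)) :=
    (isOpen_lt continuous_const Complex.continuous_re).inter Metric.isOpen_ball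
  have key := (hasDerivAt_integral_of_dominated_loc_of_deriv_le (μ := μ)
    (F := fun (w : ℂ) (z : ℝ) => Complex.exp (w * z) - 1 - w * z)
    (F' := fun (w : ℂ) (z : ℝ) => (z : ℂ) * (Complex.exp (w * z) - 1))
    (bound := fun z => (‖w‖ + 1) * (z ^ 2 * Real.exp (L * z)))
    (hopen.mem_nhds (x := w) ⟨hw, by simp⟩)
    (Eventually.of_forall fun w => K_meas μ w) (K_int μ hneg L hL0 hH w hw.le)
    (K'_meas μ w) (by
      filter_upwards [hneg] with z hz v hv
      refine (aux_K' v z L hz hL0 (le_of_lt hv.1)).trans ?_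
      have : ‖v‖ ≤ ‖w‖ + 1 := by simpa using (Metric.mem_ball.1 hv.2).le
      gcongr) (hH.const_mul _) (Eventually.of_forall fun z v _ => by
        have h1 : HasDerivAt (fun v : ℂ => v * (z : ℂ)) z v := by
          simpa using (hasDerivAt_id v).mul_const (z : ℂ)
        have := (h1.cexp.sub_const 1).sub h1
        exact this.congr_deriv (by ring))).2
  have h2 : HasDerivAt (fun w : ℂ => (σ : ℂ) ^ 2 * w ^ 2 / 2 + m * w) ((σ : ℂ) ^ 2 * w + m) w := by
    have := ((((hasDerivAt_id w).pow 2).const_mul ((σ : ℂ) ^ 2)).div_const 2).add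
      ((hasDerivAt_id w).const_mul (m : ℂ))
    exact this.congr_deriv (by simp; ring)
  exact h2.add key

theorem tilt_int (μ : Measure ℝ) (hneg : ∀ᵐ z ∂μ, z < 0) (a : ℝ)
    (hH : Integrable (fun z => z ^ 2 * Real.exp (a * z)) μ) (lam : ℝ) :
    Integrable (fun z : ℝ => (Complex.exp (Complex.I * lam * z) - 1 - Complex.I * lam * z)
      * ((Real.exp (a * z) : ℝ) : ℂ)) μ := by
  refine (hH.const_mul (|lam| ^ 2)).mono' (by fun_prop) ?_
  filter_upwards [hneg] with z hz
  have := aux_K (Complex.I * lam) z 0 hz le_rfl (by simp)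
  rw [norm_mul, Complex.norm_real, Real.norm_of_nonneg (Real.exp_pos _).le]
  simp at this
  have := mul_le_mul_of_nonneg_right this (Real.exp_pos (a * z)).le
  rw [sq_abs]
  linarith

theorem PsiC_decomp (σ m : ℝ) (μ : Measure ℝ) (hneg : ∀ᵐ z ∂μ, z < 0) (a : ℝ) (ha0 : a ≤ 0)
    (hH : Integrable (fun z => z ^ 2 * Real.exp (a * z)) μ) (lam : ℝ) :
    PsiC σ m μ (a + lam * Complex.I) = PsiC σ m μ a + lam * Complex.I * PsiC' σ m μ a
      - (σ : ℂ) ^ 2 * lam ^ 2 / 2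
      + ∫ z : ℝ, (Complex.exp (Complex.I * lam * z) - 1 - Complex.I * lam * z)
        * ((Real.exp (a * z) : ℝ) : ℂ) ∂μ := by
  have e : ∫ z : ℝ, (Complex.exp ((a + lam * Complex.I) * z) - 1 - (a + lam * Complex.I) * z) ∂μ
      = (∫ z : ℝ, (Complex.exp ((a : ℂ) * z) - 1 - (a : ℂ) * z) ∂μ)
      + lam * Complex.I * (∫ z : ℝ, (z : ℂ) * (Complex.exp ((a : ℂ) * z) - 1) ∂μ)
      + ∫ z : ℝ, (Complex.exp (Complex.I * lam * z) - 1 - Complex.I * lam * z)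
        * ((Real.exp (a * z) : ℝ) : ℂ) ∂μ := by
    have i1 := K_int μ hneg a ha0 hH a (by simp)
    have i2 := (K'_int μ hneg a ha0 hH a (by simp)).const_mul (lam * Complex.I)
    have i12 : Integrable (fun z : ℝ => Complex.exp ((a : ℂ) * z) - 1 - (a : ℂ) * z
        + lam * Complex.I * ((z : ℂ) * (Complex.exp ((a : ℂ) * z) - 1))) μ := i1.add i2
    rw [← integral_const_mul, ← integral_add i1 i2,
      ← integral_add i12 (tilt_int μ hneg a hH lam)]
    refine integral_congr_ae (Eventually.of_forall fun z => ?_)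
    simp only [Complex.ofReal_exp, Complex.ofReal_mul]
    rw [show (a + lam * Complex.I : ℂ) * z = a * z + Complex.I * lam * z by ring, Complex.exp_add]
    ring
  unfold PsiC PsiC'
  rw [e]
  linear_combination ((σ : ℂ) ^ 2 * lam ^ 2 / 2) * Complex.I_sq

theorem PsiC_real (σ m : ℝ) (ν : Measure ℝ) (a : ℝ) :
    PsiC σ m (ν.restrict (Iio 0)) a = (cumulant σ m ν a : ℂ) := by
  unfold PsiC cumulant
  push_cast
  rw [← integral_complex_ofReal]
  push_cast
  rfl

theorem PsiC'_real (σ m : ℝ) (μ : Measure ℝ) (a : ℝ) :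
    PsiC' σ m μ a = ((PsiC' σ m μ a).re : ℂ) := by
  have : ∫ z : ℝ, (z : ℂ) * (Complex.exp ((a : ℂ) * z) - 1) ∂μ
    = ((∫ z : ℝ, z * (Real.exp (a * z) - 1) ∂μ : ℝ) : ℂ) := by
    rw [← integral_complex_ofReal]
    push_cast
    rfl
  unfold PsiC'
  rw [this]
  apply Complex.ext <;> simp [← Complex.ofReal_pow]

theorem PsiC_char (σ m : ℝ) (ν : Measure ℝ) (lam : ℝ) :
    charExponent σ m ν lam = PsiC σ m (ν.restrict (Iio 0)) (((0:ℝ):ℂ) + lam * Complex.I) := by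
  unfold PsiC charExponent
  rw [show (((0:ℝ):ℂ) + lam * Complex.I) = Complex.I * lam by push_cast; ring]
  push_cast
  linear_combination -((σ : ℂ) ^ 2 * lam ^ 2 / 2) * Complex.I_sq

theorem re_tilt (μ : Measure ℝ) (hneg : ∀ᵐ z ∂μ, z < 0) (a : ℝ)
    (hH : Integrable (fun z => z ^ 2 * Real.exp (a * z)) μ) (lam : ℝ) :
    (∫ z : ℝ, (Complex.exp (Complex.I * lam * z) - 1 - Complex.I * lam * z)
        * ((Real.exp (a * z) : ℝ) : ℂ) ∂μ).re
    = - ∫ z : ℝ, (1 - Real.cos (lam * z)) * Real.exp (a * z) ∂μ := by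
  have := integral_re (tilt_int μ hneg a hH lam)
  simp only [RCLike.re_eq_complex_re] at this
  rw [← this, ← integral_neg]
  refine integral_congr_ae (Eventually.of_forall fun z => ?_)
  simp only [Complex.re_mul_ofReal]
  rw [show Complex.I * lam * z = ((lam * z : ℝ) : ℂ) * Complex.I by push_cast; ring]
  simp only [Complex.sub_re, Complex.exp_ofReal_mul_I_re]
  simp
  ring

theorem PsiC_re_le (σ m : ℝ) (μ : Measure ℝ) (hneg : ∀ᵐ z ∂μ, z < 0) (a : ℝ) (ha0 : a ≤ 0)
    (hH : Integrable (fun z => z ^ 2 * Real.exp (a * z)) μ) (lam : ℝ) :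
    (PsiC σ m μ (a + lam * Complex.I)).re ≤ (PsiC σ m μ a).re -
      (σ ^ 2 * lam ^ 2 / 2 + ∫ z : ℝ, (1 - Real.cos (lam * z)) ∂μ) := by
  rw [PsiC_decomp σ m μ hneg a ha0 hH lam, PsiC'_real]
  simp only [Complex.add_re, Complex.sub_re, re_tilt μ hneg a hH lam]
  have h1 : ∫ z : ℝ, (1 - Real.cos (lam * z)) ∂μ
      ≤ ∫ z : ℝ, (1 - Real.cos (lam * z)) * Real.exp (a * z) ∂μ := by
    refine integral_mono_of_nonneg (Eventually.of_forall fun z => ?_) ?_ ?_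
    · simpa using Real.cos_le_one _
    · have := (tilt_int μ hneg a hH lam).re.neg
      refine this.congr (Eventually.of_forall fun z => ?_)
      simp only [RCLike.re_eq_complex_re, Complex.re_mul_ofReal, Pi.neg_apply]
      rw [show Complex.I * lam * z = ((lam * z : ℝ) : ℂ) * Complex.I by push_cast; ring]
      simp only [Complex.sub_re, Complex.exp_ofReal_mul_I_re]
      simp
      ring
    · filter_upwards [hneg] with z hz
      refine le_mul_of_one_le_right (by simpa using Real.cos_le_one _) ?_
      exact Real.one_le_exp (by nlinarith)
  have h2 : ((σ : ℂ) ^ 2 * lam ^ 2 / 2).re = σ ^ 2 * lam ^ 2 / 2 := by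
    rw [show (σ : ℂ) ^ 2 * lam ^ 2 / 2 = ((σ ^ 2 * lam ^ 2 / 2 : ℝ) : ℂ) by push_cast; rfl,
      Complex.ofReal_re]
  have h3 : (lam * Complex.I * ((PsiC' σ m μ a).re : ℂ)).re = 0 := by simp
  rw [h2, h3]
  linarith

theorem int_H (ν : Measure ℝ) (lamM : ℝ)
    (hmin : ∫⁻ z, ENNReal.ofReal (min (z ^ 2) |z|) ∂ν ≠ ⊤)
    (hexp : ∀ lam ∈ Ioo lamM (0 : ℝ),
      ∫⁻ z in Iio (-1 : ℝ), ENNReal.ofReal (Real.exp (lam * z)) ∂ν ≠ ⊤)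
    (a : ℝ) (ha : a ∈ Ioc lamM 0) :
    Integrable (fun z => z ^ 2 * Real.exp (a * z)) (ν.restrict (Iio 0)) := by
  have h1 : Integrable (fun z : ℝ => min (z ^ 2) |z|) ν :=
    (lintegral_ofReal_ne_top_iff_integrable (by fun_prop)
      (Eventually.of_forall fun z => by positivity)).1 hmin
  obtain ⟨L', hL1, hL2⟩ := exists_between ha.1
  have h2 : IntegrableOn (fun z : ℝ => Real.exp (L' * z)) (Iio (-1)) ν :=
    (lintegral_ofReal_ne_top_iff_integrable (by fun_prop)
      (Eventually.of_forall fun z => by positivity)).1 (hexp L' ⟨hL1, hL2.trans_le ha.2⟩)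
  have hm : ∀ μ : Measure ℝ, AEStronglyMeasurable (fun z : ℝ => z ^ 2 * Real.exp (a * z)) μ :=
    fun μ => (by fun_prop : Continuous (fun z : ℝ => z ^ 2 * Real.exp (a * z))).aestronglyMeasurable
  have h3 : IntegrableOn (fun z : ℝ => z ^ 2 * Real.exp (a * z)) (Iio (-1)) ν := by
    refine (h2.const_mul (2 / (a - L') ^ 2)).mono' (hm _) ?_
    filter_upwards [ae_restrict_mem measurableSet_Iio] with z hz
    have hz : z < -1 := hz
    rw [Real.norm_of_nonneg (by positivity)]
    have hd : 0 < a - L' := by linarith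
    have q := Real.quadratic_le_exp_of_nonneg (x := -((a - L') * z)) (by nlinarith)
    have e : Real.exp (L' * z) = Real.exp (a * z) * Real.exp (-((a - L') * z)) := by
      rw [← Real.exp_add]; congr 1; ring
    rw [e, div_mul_eq_mul_div, le_div_iff₀ (by positivity)]
    have : 0 < Real.exp (a * z) := Real.exp_pos _
    have q2 : (a - L') ^ 2 * z ^ 2 ≤ 2 * Real.exp (-((a - L') * z)) := by nlinarith
    nlinarith [mul_le_mul_of_nonneg_left q2 this.le]
  have h4 : IntegrableOn (fun z : ℝ => z ^ 2 * Real.exp (a * z)) (Ico (-1) 0) ν := by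
    refine ((h1.integrableOn (s := Ico (-1) 0)).const_mul (Real.exp (-a))).mono' (hm _) ?_
    filter_upwards [ae_restrict_mem measurableSet_Ico] with z hz
    rw [Real.norm_of_nonneg (by positivity)]
    have e1 : min (z ^ 2) |z| = z ^ 2 := by
      apply min_eq_left
      rw [abs_of_neg hz.2]; nlinarith [hz.1, hz.2]
    have e2 : Real.exp (a * z) ≤ Real.exp (-a) := Real.exp_le_exp.2 (by nlinarith [hz.1, ha.2])
    rw [e1, mul_comm]
    gcongr
  have := h3.union h4
  rwa [Iio_union_Ico_eq_Iio (by norm_num)] at this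

theorem lower_bd (σ : ℝ) (ν : Measure ℝ)
    (hcase : 0 < σ ∨ ∃ s ∈ Ioo (0 : ℝ) 2, 0 < Filter.liminf
      (fun x => x ^ (s - 2) * (∫⁻ z in Ioo (-x) (0 : ℝ), ENNReal.ofReal (z ^ 2) ∂ν).toReal)
      (nhdsWithin 0 (Ioi 0)))
    (h2 : IntegrableOn (fun z : ℝ => z ^ 2) (Iio 0) ν) :
    ∃ c > 0, ∃ s : ℝ, 0 < s ∧ s ≤ 2 ∧ ∀ lam : ℝ, c * min (lam ^ 2) (|lam| ^ s) ≤
      σ ^ 2 * lam ^ 2 / 2 + ∫ z in Iio 0, (1 - Real.cos (lam * z)) ∂ν := by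
  have hnn : ∀ lam : ℝ, 0 ≤ ∫ z in Iio 0, (1 - Real.cos (lam * z)) ∂ν := fun lam =>
    integral_nonneg fun z => by simpa using Real.cos_le_one _
  rcases hcase with h | ⟨s, hs, h⟩
  · refine ⟨σ ^ 2 / 2, by positivity, 2, by norm_num, le_rfl, fun lam => ?_⟩
    have := hnn lam
    have h3 : min (lam ^ 2) (|lam| ^ (2 : ℝ)) ≤ lam ^ 2 := min_le_left _ _
    nlinarith [mul_le_mul_of_nonneg_left h3 (by positivity : 0 ≤ σ ^ 2 / 2)]
  · rw [Filter.liminf_eq] at h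
    have hne : ({a : ℝ | ∀ᶠ x in nhdsWithin (0 : ℝ) (Ioi 0), a ≤ x ^ (s - 2) *
        (∫⁻ z in Ioo (-x) (0 : ℝ), ENNReal.ofReal (z ^ 2) ∂ν).toReal}).Nonempty := by
      by_contra hcon
      rw [Set.not_nonempty_iff_eq_empty] at hcon
      rw [hcon] at h
      simp at h
    obtain ⟨a, ha, ha0⟩ := exists_lt_of_lt_csSup hne h
    have ha : ∀ᶠ x in nhdsWithin (0 : ℝ) (Ioi 0), a ≤ x ^ (s - 2) *
        (∫⁻ z in Ioo (-x) (0 : ℝ), ENNReal.ofReal (z ^ 2) ∂ν).toReal := ha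
    obtain ⟨x0, hx0, hx⟩ := mem_nhdsGT_iff_exists_Ioc_subset.1 ha
    have hx0 : 0 < x0 := hx0
    have hI : ∀ x : ℝ, 0 < x → x ≤ x0 → a * x ^ (2 - s) ≤ ∫ z in Ioo (-x) 0, z ^ 2 ∂ν := by
      intro x h0 h1
      have := hx (show x ∈ Ioc 0 x0 from ⟨h0, h1⟩)
      have this : a ≤ x ^ (s - 2) *
        (∫⁻ z in Ioo (-x) (0 : ℝ), ENNReal.ofReal (z ^ 2) ∂ν).toReal := this
      rw [← integral_eq_lintegral_of_nonneg_ae (Eventually.of_forall fun z => by positivity)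
        (by fun_prop)] at this
      have h5 := mul_le_mul_of_nonneg_right this (Real.rpow_nonneg h0.le (2 - s))
      have h6 : x ^ (s - 2) * x ^ (2 - s) = 1 := by
        rw [← Real.rpow_add h0]; simp
      calc _ ≤ _ := h5
        _ = (x ^ (s - 2) * x ^ (2 - s)) * ∫ z in Ioo (-x) 0, z ^ 2 ∂ν := by ring
        _ = _ := by rw [h6, one_mul]
    have hint : ∀ lam : ℝ, IntegrableOn (fun z : ℝ => 1 - Real.cos (lam * z)) (Iio 0) ν := by
      intro lam
      refine (h2.const_mul (lam ^ 2 / 2)).mono' (by fun_prop) (Eventually.of_forall fun z => ?_)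
      rw [Real.norm_of_nonneg (by simpa using Real.cos_le_one _)]
      have := Real.one_sub_sq_div_two_le_cos (x := lam * z)
      nlinarith
    have hJ : ∀ lam x : ℝ, 0 < x → |lam| * x ≤ 1 → lam ^ 2 / 8 * ∫ z in Ioo (-x) 0, z ^ 2 ∂ν ≤
        ∫ z in Iio 0, (1 - Real.cos (lam * z)) ∂ν := by
      intro lam x h0 h1
      calc _ = ∫ z in Ioo (-x) 0, lam ^ 2 / 8 * z ^ 2 ∂ν := (integral_const_mul _ _).symm
        _ ≤ ∫ z in Ioo (-x) 0, (1 - Real.cos (lam * z)) ∂ν := by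
          refine setIntegral_mono_on ((h2.mono_set Ioo_subset_Iio_self).const_mul _)
            ((hint lam).mono_set Ioo_subset_Iio_self) measurableSet_Ioo fun z hz => ?_
          have hz1 : |z| ≤ x := abs_le.2 ⟨hz.1.le, by linarith [hz.2]⟩
          have h3 : |lam * z| ≤ 1 := by
            rw [abs_mul]
            exact (mul_le_mul_of_nonneg_left hz1 (abs_nonneg _)).trans h1
          have h4 := Real.cos_le_one_sub_mul_cos_sq (x := lam * z)
            (h3.trans (by linarith [Real.pi_gt_three]))
          have h5 : (1 : ℝ) / 8 ≤ 2 / Real.pi ^ 2 := by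
            rw [div_le_div_iff₀ (by norm_num) (by positivity)]
            nlinarith [Real.pi_le_four, Real.pi_pos]
          nlinarith [mul_le_mul_of_nonneg_right h5 (sq_nonneg (lam * z))]
        _ ≤ _ := setIntegral_mono_set (hint lam)
          (Eventually.of_forall fun z => by simpa using Real.cos_le_one _)
          (Eventually.of_forall fun z hz => Ioo_subset_Iio_self hz)
    refine ⟨min (a / 8) (a / 8 * x0 ^ (2 - s)), by positivity, s, hs.1, hs.2.le, fun lam => ?_⟩
    have hσ2 : 0 ≤ σ ^ 2 * lam ^ 2 / 2 := by positivity
    suffices hh : min (a / 8) (a / 8 * x0 ^ (2 - s)) * min (lam ^ 2) (|lam| ^ s) ≤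
        ∫ z in Iio 0, (1 - Real.cos (lam * z)) ∂ν by linarith
    by_cases hl : lam = 0
    · subst hl
      simp [Real.zero_rpow hs.1.ne']
    have hl' : 0 < |lam| := abs_pos.2 hl
    have hmn : 0 ≤ min (lam ^ 2) (|lam| ^ s) := by positivity
    rcases le_total (|lam|⁻¹) x0 with hc | hc
    · have h3 := hJ lam |lam|⁻¹ (by positivity) (by rw [mul_inv_cancel₀ hl'.ne'])
      have h4 := hI |lam|⁻¹ (by positivity) hc
      have h5 : lam ^ 2 * |lam|⁻¹ ^ (2 - s) = |lam| ^ s := by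
        rw [← sq_abs, Real.inv_rpow hl'.le, ← Real.rpow_neg hl'.le, ← Real.rpow_natCast,
          ← Real.rpow_add hl']
        congr 1; push_cast; ring
      calc _ ≤ a / 8 * (|lam| ^ s) := by
            apply mul_le_mul (min_le_left _ _) (min_le_right _ _) hmn (by positivity)
        _ = lam ^ 2 / 8 * (a * |lam|⁻¹ ^ (2 - s)) := by rw [← h5]; ring
        _ ≤ _ := (mul_le_mul_of_nonneg_left h4 (by positivity)).trans h3
    · have h3 := hJ lam x0 hx0 (by
        have := mul_le_mul_of_nonneg_left hc hl'.le
        rwa [mul_inv_cancel₀ hl'.ne'] at this)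
      have h4 := hI x0 hx0 le_rfl
      calc _ ≤ a / 8 * x0 ^ (2 - s) * lam ^ 2 := by
            apply mul_le_mul (min_le_right _ _) (min_le_left _ _) hmn (by positivity)
        _ = lam ^ 2 / 8 * (a * x0 ^ (2 - s)) := by ring
        _ ≤ _ := (mul_le_mul_of_nonneg_left h4 (by positivity)).trans h3

theorem gbound_int (k s : ℝ) (hk : 0 < k) (hs : 0 < s) :
    Integrable (fun u : ℝ => Real.exp (-(k * min (u ^ 2) (|u| ^ s)))) := by
  have i1 := integrable_exp_neg_mul_sq hk
  have i2 : Integrable (fun u : ℝ => Real.exp (-k * |u| ^ s)) := by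
    have h : IntegrableOn (fun u : ℝ => Real.exp (-k * |u| ^ s)) (Ioi 0) := by
      refine (integrableOn_rpow_mul_exp_neg_mul_rpow (s := 0) (by norm_num) hs hk).congr_fun ?_
        measurableSet_Ioi
      intro x hx
      simp [abs_of_pos (show 0 < x from hx)]
    rw [← integrableOn_univ, ← Iio_union_Ici (a := (0 : ℝ)), integrableOn_union,
      integrableOn_Ici_iff_integrableOn_Ioi]
    refine ⟨?_, h⟩
    rw [← (Measure.measurePreserving_neg (volume : Measure ℝ)).integrableOn_comp_preimage
      (Homeomorph.neg ℝ).measurableEmbedding]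
    simpa [Function.comp_def] using h
  refine (i1.add i2).mono' ?_ (Eventually.of_forall fun u => ?_)
  · refine Measurable.aestronglyMeasurable ?_
    fun_prop
  · rw [Real.norm_of_nonneg (Real.exp_pos _).le]
    simp only [Pi.add_apply]
    rcases min_choice (u ^ 2) (|u| ^ s) with h | h <;> rw [h, ← neg_mul]
    · linarith [Real.exp_pos (-k * |u| ^ s)]
    · linarith [Real.exp_pos (-k * u ^ 2)]

theorem gbound_tendsto (k s : ℝ) (hk : 0 < k) (hs : 0 < s) :
    Tendsto (fun u : ℝ => Real.exp (-(k * min (u ^ 2) (|u| ^ s)))) atTop (nhds 0) := by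
  refine Real.tendsto_exp_atBot.comp (tendsto_neg_atTop_atBot.comp ?_)
  refine Tendsto.const_mul_atTop hk ?_
  have h1 : Tendsto (fun u : ℝ => u ^ 2) atTop atTop := tendsto_pow_atTop (by norm_num)
  have h2 : Tendsto (fun u : ℝ => |u| ^ s) atTop atTop :=
    (tendsto_rpow_atTop hs).comp tendsto_abs_atTop_atTop
  rw [tendsto_atTop] at *
  intro B
  filter_upwards [h1 B, h2 B] with u p q using le_min p q

theorem shift (F : ℂ → ℂ) (L : ℝ) (hL : L ≤ 0) (G : ℝ → ℝ)
    (hc : ContinuousOn F {w | L ≤ w.re}) (hd : DifferentiableOn ℂ F {w | L < w.re})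
    (hb : ∀ a ∈ Icc L 0, ∀ y : ℝ, ‖F (a + y * Complex.I)‖ ≤ G y) (hG : Integrable G)
    (hG0 : Tendsto G atTop (nhds 0)) (hGe : ∀ y, G (-y) = G y) :
    ∫ y : ℝ, F (((0 : ℝ) : ℂ) + y * Complex.I) = ∫ y : ℝ, F ((L : ℂ) + y * Complex.I) := by
  have hint : ∀ a ∈ Icc L 0, Integrable (fun y : ℝ => F ((a : ℂ) + y * Complex.I)) := by
    intro a ha
    refine hG.mono' ?_ (Eventually.of_forall (hb a ha))
    have : Continuous (fun y : ℝ => F ((a : ℂ) + y * Complex.I)) := by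
      rw [← continuousOn_univ]
      refine hc.comp (by fun_prop) fun y _ => ?_
      simpa using ha.1
    exact this.aestronglyMeasurable
  have hrect : ∀ R : ℝ, 0 ≤ R → (((∫ x : ℝ in L..0, F (x + ((-R : ℝ) : ℂ) * Complex.I)) -
      ∫ x : ℝ in L..0, F (x + (R : ℂ) * Complex.I)) +
      Complex.I • ∫ y : ℝ in (-R)..R, F (((0 : ℝ) : ℂ) + y * Complex.I)) -
      Complex.I • ∫ y : ℝ in (-R)..R, F ((L : ℂ) + y * Complex.I) = 0 := by
    intro R hR
    have := Complex.integral_boundary_rect_eq_zero_of_continuousOn_of_differentiableOn F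
      ⟨L, -R⟩ ⟨0, R⟩ (hc.mono ?_) (hd.mono ?_)
    · simpa using this
    · intro w hw
      have := hw.1
      simp only [uIcc_of_le hL, mem_preimage] at this
      exact this.1
    · intro w hw
      have := hw.1
      simp only [min_eq_left hL, mem_preimage] at this
      exact this.1
  have lim0 : ∀ f : ℝ → ℝ, (∀ R, G (f R) = G R) →
      Tendsto (fun R : ℝ => ∫ x : ℝ in L..0, F (x + (f R : ℂ) * Complex.I)) atTop (nhds 0) := by
    intro f hf
    refine squeeze_zero_norm (a := fun R => G R * |0 - L|) (fun R => ?_)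
      (by simpa using hG0.mul_const (|0 - L|))
    refine intervalIntegral.norm_integral_le_of_norm_le_const fun x hx => ?_
    rw [uIoc_of_le hL] at hx
    rw [← hf R]
    exact hb x ⟨hx.1.le, hx.2⟩ _
  have l1 := lim0 (fun R => -R) hGe
  have l2 := lim0 (fun R => R) fun _ => rfl
  have l3 := intervalIntegral_tendsto_integral (hint 0 ⟨hL, le_rfl⟩) tendsto_neg_atTop_atBot
    tendsto_id
  have l4 := intervalIntegral_tendsto_integral (hint L ⟨le_rfl, hL⟩) tendsto_neg_atTop_atBot
    tendsto_id
  have l5 := ((l1.sub l2).add (l3.const_smul Complex.I)).sub (l4.const_smul Complex.I)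
  have l6 := tendsto_nhds_unique (l5.congr' (by
    filter_upwards [eventually_ge_atTop (0 : ℝ)] with R hR using hrect R hR)) tendsto_const_nhds
  have l7 : Complex.I * ((∫ y : ℝ, F (((0 : ℝ) : ℂ) + y * Complex.I)) -
    ∫ y : ℝ, F ((L : ℂ) + y * Complex.I)) = 0 := by
    simp only [smul_eq_mul] at l6
    linear_combination l6
  exact sub_eq_zero.1 ((mul_eq_zero.1 l7).resolve_left Complex.I_ne_zero)

theorem ptw (x : ℝ) : Tendsto (fun t : ℝ => (t : ℂ) *
    (Complex.exp (Complex.I * (x / Real.sqrt t : ℝ)) - 1 - Complex.I * (x / Real.sqrt t : ℝ)))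
    atTop (nhds (-(x : ℂ) ^ 2 / 2)) := by
  rw [tendsto_iff_norm_sub_tendsto_zero]
  have hlim : Tendsto (fun t : ℝ => |x| ^ 3 * Real.exp |x| * (Real.sqrt t)⁻¹) atTop (nhds 0) := by
    simpa using (tendsto_inv_atTop_zero.comp Real.tendsto_sqrt_atTop).const_mul
      (|x| ^ 3 * Real.exp |x|)
  refine squeeze_zero' (Eventually.of_forall fun _ => norm_nonneg _) ?_ hlim
  filter_upwards [eventually_ge_atTop (1 : ℝ)] with t ht
  have hr : 1 ≤ Real.sqrt t := Real.one_le_sqrt.2 ht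
  set r := Real.sqrt t with hrdef
  have hrt : r ^ 2 = t := Real.sq_sqrt (by linarith)
  have hr0 : 0 < r := by linarith
  have h := Complex.norm_exp_sub_sum_le_norm_mul_exp (Complex.I * (x / r : ℝ)) 3
  have hn : ‖Complex.I * ((x / r : ℝ) : ℂ)‖ = |x| / r := by
    rw [norm_mul, Complex.norm_I, one_mul, Complex.norm_real, Real.norm_eq_abs, abs_div,
      abs_of_pos hr0]
  rw [hn] at h
  have hc : (r : ℂ) ≠ 0 := by exact_mod_cast hr0.ne'
  have e : (t : ℂ) * (Complex.exp (Complex.I * (x / r : ℝ)) - 1 - Complex.I * (x / r : ℝ))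
      - -(x : ℂ) ^ 2 / 2 = (t : ℂ) * (Complex.exp (Complex.I * (x / r : ℝ))
      - ∑ m ∈ Finset.range 3, (Complex.I * (x / r : ℝ)) ^ m / (m.factorial : ℂ)) := by
    simp only [Finset.sum_range_succ, Finset.sum_range_zero, Nat.factorial]
    rw [← hrt]
    push_cast
    field_simp
    linear_combination ((x : ℂ) ^ 2) * Complex.I_sq
  rw [e, norm_mul, Complex.norm_real, Real.norm_of_nonneg (by linarith)]
  calc _ ≤ t * ((|x| / r) ^ 3 * Real.exp (|x| / r)) := by gcongr
    _ ≤ t * ((|x| / r) ^ 3 * Real.exp |x|) := by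
      have : |x| / r ≤ |x| := div_le_self (abs_nonneg _) hr
      gcongr
    _ = _ := by rw [← hrt]; field_simp

/-- The analytic content of Corollary 2.1 of the paper: under the Esscher transform at
the critical point `λ_*`, the Fourier-inversion density of `X_t` at `b` satisfies
`p(t,b) √(2π d² t) e^{λ_* b − Ψ(λ_*) t} → 1`, where
`d² = σ² + ∫ z² e^{λ_* z} ν(dz)`. -/
theorem density_asymptotics_esscher (σ m lamM : ℝ) (hσ : 0 ≤ σ) (hm : 0 < m)
    (ν : MeasureTheory.Measure ℝ) [SigmaFinite ν]
    (hconc : ν (Ici (0 : ℝ)) = 0)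
    (hmin : ∫⁻ z, ENNReal.ofReal (min (z ^ 2) |z|) ∂ν ≠ ⊤)
    (hcase : 0 < σ ∨ ∃ s ∈ Ioo (0 : ℝ) 2, 0 < Filter.liminf
      (fun x => x ^ (s - 2) * (∫⁻ z in Ioo (-x) (0 : ℝ), ENNReal.ofReal (z ^ 2) ∂ν).toReal)
      (nhdsWithin 0 (Ioi 0)))
    (hlamM : lamM < 0)
    (hexp : ∀ lam ∈ Ioo lamM (0 : ℝ),
      ∫⁻ z in Iio (-1 : ℝ), ENNReal.ofReal (Real.exp (lam * z)) ∂ν ≠ ⊤)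
    (hderiv : ∃ lam0 ∈ Ioo lamM (0 : ℝ), deriv (cumulant σ m ν) lam0 < 0)
    (lamStar : ℝ) (hstar : lamStar ∈ Ioo lamM (0 : ℝ))
    (hstar0 : deriv (cumulant σ m ν) lamStar = 0)
    (b : ℝ) :
    (∀ᶠ t : ℝ in atTop,
      Integrable (fun lam : ℝ => Complex.exp ((t : ℂ) * charExponent σ m ν lam))) ∧
    Tendsto (fun t : ℝ => fourierDensity σ m ν t b *
        ((Real.sqrt (2 * Real.pi *
            (σ ^ 2 + ∫ z in Iio (0 : ℝ), z ^ 2 * Real.exp (lamStar * z) ∂ν) * t) : ℝ) : ℂ) *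
        ((Real.exp (lamStar * b - cumulant σ m ν lamStar * t) : ℝ) : ℂ))
      atTop (nhds 1) := by
  set μ := ν.restrict (Iio (0 : ℝ)) with hμ
  have hneg : ∀ᵐ z ∂μ, z < 0 := ae_restrict_mem measurableSet_Iio
  have hHall : ∀ a ∈ Ioc lamM 0, Integrable (fun z => z ^ 2 * Real.exp (a * z)) μ :=
    fun a ha => int_H ν lamM hmin hexp a ha
  have hH := hHall lamStar ⟨hstar.1, hstar.2.le⟩
  have hz2 : IntegrableOn (fun z : ℝ => z ^ 2) (Iio 0) ν := by
    have h0 := hHall 0 ⟨hlamM, le_rfl⟩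
    simp only [zero_mul, Real.exp_zero, mul_one] at h0
    exact h0
  obtain ⟨c, hc, s, hs0, hs2, hlow⟩ := lower_bd σ ν hcase hz2
  -- critical point
  have hP' : PsiC' σ m μ lamStar = 0 := by
    obtain ⟨L', h1, h2⟩ := exists_between hstar.1
    have hd := (PsiC_deriv σ m μ hneg L' (h2.trans hstar.2).le
      (hHall L' ⟨h1, (h2.trans hstar.2).le⟩) lamStar (by simpa using h2)).real_of_complex
    have he : (fun x : ℝ => (PsiC σ m μ x).re) = cumulant σ m ν := by
      ext x; rw [hμ, PsiC_real, Complex.ofReal_re]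
    rw [he] at hd
    rw [PsiC'_real, ← hd.deriv, hstar0, Complex.ofReal_zero]
  -- bounds
  have hre : ∀ a ∈ Icc lamStar 0, ∀ lam : ℝ, (PsiC σ m μ (a + lam * Complex.I)).re ≤
      (PsiC σ m μ a).re - c * min (lam ^ 2) (|lam| ^ s) := by
    intro a ha lam
    have h1 := PsiC_re_le σ m μ hneg a ha.2 (hHall a ⟨hstar.1.trans_le ha.1, ha.2⟩) lam
    have h2 := hlow lam
    linarith
  have hcont := PsiC_cont σ m μ hneg lamStar hstar.2.le hH
  obtain ⟨B, hB⟩ : ∃ B : ℝ, ∀ a ∈ Icc lamStar 0, ‖PsiC σ m μ (a : ℝ)‖ ≤ B :=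
    isCompact_Icc.exists_bound_of_continuousOn (f := fun a : ℝ => PsiC σ m μ a)
      (hcont.comp (by fun_prop) fun a ha => by simpa using ha.1)
  have hline : ∀ a ∈ Icc lamStar 0, Continuous (fun lam : ℝ => PsiC σ m μ (a + lam * Complex.I)) := by
    intro a ha
    rw [← continuousOn_univ]
    refine hcont.comp (by fun_prop) fun y _ => ?_
    simpa using ha.1
  -- first claim
  refine ⟨?_, ?_⟩
  · filter_upwards [eventually_gt_atTop (0 : ℝ)] with t ht
    have h00 : (0 : ℝ) ∈ Icc lamStar 0 := ⟨hstar.2.le, le_rfl⟩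
    simp only [PsiC_char]
    refine (gbound_int (t * c) s (by positivity) hs0).mono' ?_ (Eventually.of_forall fun lam => ?_)
    · have := hline 0 h00
      exact (by fun_prop : Continuous fun lam : ℝ => Complex.exp (t * PsiC σ m μ
        (((0 : ℝ) : ℂ) + lam * Complex.I))).aestronglyMeasurable
    · rw [Complex.norm_exp, Complex.re_ofReal_mul]
      have h1 := hre 0 h00 lam
      have h0 : PsiC σ m μ ((0 : ℝ) : ℂ) = 0 := by simp [PsiC]
      rw [h0, Complex.zero_re] at h1
      exact Real.exp_le_exp.2 (by nlinarith [mul_le_mul_of_nonneg_left h1 ht.le])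
  -- the variance
  set D : ℝ := σ ^ 2 + ∫ z in Iio (0 : ℝ), z ^ 2 * Real.exp (lamStar * z) ∂ν with hD
  have hDpos : 0 < D := by
    have h1 := hlow 1
    simp only [abs_one, Real.one_rpow, one_pow, min_self, one_mul, mul_one] at h1
    have h2 : ∫ z in Iio 0, (1 - Real.cos z) ∂ν ≤
        ∫ z in Iio (0 : ℝ), z ^ 2 * Real.exp (lamStar * z) ∂ν := by
      refine integral_mono_of_nonneg (Eventually.of_forall fun z => ?_) hH ?_
      · simpa using Real.cos_le_one _
      · filter_upwards [hneg] with z hz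
        have h3 := Real.one_sub_sq_div_two_le_cos (x := z)
        have h4 : 1 ≤ Real.exp (lamStar * z) := Real.one_le_exp (by nlinarith [hstar.2])
        nlinarith [mul_le_mul_of_nonneg_left h4 (sq_nonneg z), sq_nonneg z]
    nlinarith [sq_nonneg σ]
  -- tilted exponent
  set Q : ℝ → ℂ := fun lam => PsiC σ m μ (lamStar + lam * Complex.I) - PsiC σ m μ lamStar with hQ
  have hQre : ∀ lam, (Q lam).re ≤ -(c * min (lam ^ 2) (|lam| ^ s)) := by
    intro lam
    have := hre lamStar ⟨le_rfl, hstar.2.le⟩ lam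
    simp only [hQ, Complex.sub_re]
    linarith
  have hQc : Continuous Q := (hline lamStar ⟨le_rfl, hstar.2.le⟩).sub continuous_const
  have hQlim : ∀ u : ℝ, Tendsto (fun t : ℝ => (t : ℂ) * Q (u / Real.sqrt t)) atTop
      (nhds (-(D / 2 * u ^ 2 : ℝ) : ℂ)) := by
    intro u
    have hdct : Tendsto (fun t : ℝ => ∫ z : ℝ, (t : ℂ) * ((Complex.exp (Complex.I *
        (u / Real.sqrt t : ℝ) * z) - 1 - Complex.I * (u / Real.sqrt t : ℝ) * z)
        * ((Real.exp (lamStar * z) : ℝ) : ℂ)) ∂μ) atTop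
        (nhds (∫ z : ℝ, (-((u * z : ℝ) : ℂ) ^ 2 / 2) * ((Real.exp (lamStar * z) : ℝ) : ℂ) ∂μ)) := by
      refine tendsto_integral_filter_of_dominated_convergence
        (fun z => u ^ 2 * (z ^ 2 * Real.exp (lamStar * z))) ?_ ?_ (hH.const_mul _) ?_
      · exact Eventually.of_forall fun t => Continuous.aestronglyMeasurable (by fun_prop)
      · filter_upwards [eventually_ge_atTop (1 : ℝ)] with t ht
        filter_upwards [hneg] with z hz
        have h1 := aux_K (Complex.I * (u / Real.sqrt t : ℝ)) z 0 hz le_rfl (by simp)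
        rw [norm_mul, norm_mul, Complex.norm_real, Complex.norm_real,
          Real.norm_of_nonneg (Real.exp_pos _).le, Real.norm_of_nonneg (by linarith)]
        rw [norm_mul, Complex.norm_I, one_mul, Complex.norm_real, Real.norm_eq_abs, sq_abs,
          div_pow, Real.sq_sqrt (by linarith), zero_mul, Real.exp_zero, mul_one] at h1
        have h2 : t * (u ^ 2 / t * z ^ 2) = u ^ 2 * z ^ 2 := by field_simp
        have h3 := mul_le_mul_of_nonneg_left h1 (by linarith : (0 : ℝ) ≤ t)
        rw [h2] at h3
        have h4 := mul_le_mul_of_nonneg_right h3 (Real.exp_pos (lamStar * z)).le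
        linarith
      · refine Eventually.of_forall fun z => ?_
        have h1 := (ptw (u * z)).mul_const ((Real.exp (lamStar * z) : ℝ) : ℂ)
        refine h1.congr fun t => ?_
        rw [show Complex.I * (u / Real.sqrt t : ℝ) * z = Complex.I * (u * z / Real.sqrt t : ℝ) by
          push_cast; ring]
        ring
    have hval : (∫ z : ℝ, (-((u * z : ℝ) : ℂ) ^ 2 / 2) * ((Real.exp (lamStar * z) : ℝ) : ℂ) ∂μ)
        = ((-(u ^ 2 / 2) * ∫ z : ℝ, z ^ 2 * Real.exp (lamStar * z) ∂μ : ℝ) : ℂ) := by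
      rw [← integral_const_mul, ← integral_complex_ofReal]
      refine integral_congr_ae (Eventually.of_forall fun z => ?_)
      push_cast
      ring
    rw [hval] at hdct
    have h5 := hdct.const_add (-((σ ^ 2 * u ^ 2 / 2 : ℝ) : ℂ))
    have h6 : (-((σ ^ 2 * u ^ 2 / 2 : ℝ) : ℂ)) + ((-(u ^ 2 / 2) *
        ∫ z : ℝ, z ^ 2 * Real.exp (lamStar * z) ∂μ : ℝ) : ℂ) = (-(D / 2 * u ^ 2 : ℝ) : ℂ) := by
      rw [hD]; push_cast; ring
    rw [h6] at h5
    refine h5.congr' ?_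
    filter_upwards [eventually_ge_atTop (1 : ℝ)] with t ht
    have h7 : ((Real.sqrt t : ℝ) : ℂ) ^ 2 = t := by
      rw [← Complex.ofReal_pow, Real.sq_sqrt (by linarith)]
    have h8 : (t : ℂ) ≠ 0 := by
      have : t ≠ 0 := by linarith
      exact_mod_cast this
    simp only [hQ]
    rw [PsiC_decomp σ m μ hneg lamStar hstar.2.le hH, hP', integral_const_mul]
    generalize (∫ z : ℝ, (Complex.exp (Complex.I * ((u / Real.sqrt t : ℝ) : ℂ) * z) - 1 -
      Complex.I * ((u / Real.sqrt t : ℝ) : ℂ) * z) * ((Real.exp (lamStar * z) : ℝ) : ℂ) ∂μ) = J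
    push_cast
    rw [div_pow, h7]
    field_simp
    ring
  -- the rescaled integral
  have hmain : Tendsto (fun t : ℝ => ∫ u : ℝ, Complex.exp (-(Complex.I) * b * (u / Real.sqrt t : ℝ)) *
      Complex.exp ((t : ℂ) * Q (u / Real.sqrt t))) atTop
      (nhds (∫ u : ℝ, ((Real.exp (-(D / 2) * u ^ 2) : ℝ) : ℂ))) := by
    refine tendsto_integral_filter_of_dominated_convergence
      (fun u => Real.exp (-(c * min (u ^ 2) (|u| ^ s)))) ?_ ?_ (gbound_int c s hc hs0) ?_
    · exact Eventually.of_forall fun t => Continuous.aestronglyMeasurable (by fun_prop)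
    · filter_upwards [eventually_ge_atTop (1 : ℝ)] with t ht
      refine Eventually.of_forall fun u => ?_
      have hr : 1 ≤ Real.sqrt t := Real.one_le_sqrt.2 ht
      have hrt : Real.sqrt t ^ 2 = t := Real.sq_sqrt (by linarith)
      rw [norm_mul, Complex.norm_exp, Complex.norm_exp, Complex.re_ofReal_mul]
      have h1 : (-(Complex.I) * b * (u / Real.sqrt t : ℝ)).re = 0 := by simp
      rw [h1, Real.exp_zero, one_mul]
      refine Real.exp_le_exp.2 ?_
      have h2 := mul_le_mul_of_nonneg_left (hQre (u / Real.sqrt t)) (by linarith : (0 : ℝ) ≤ t)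
      have h3 : min (u ^ 2) (|u| ^ s) ≤ t * min ((u / Real.sqrt t) ^ 2) (|u / Real.sqrt t| ^ s) := by
        rw [mul_min_of_nonneg _ _ (by linarith : (0 : ℝ) ≤ t)]
        refine min_le_min ?_ ?_
        · rw [div_pow, hrt, mul_div_cancel₀ _ (by linarith : t ≠ 0)]
        · rw [abs_div, abs_of_pos (by linarith : 0 < Real.sqrt t),
            Real.div_rpow (abs_nonneg _) (by linarith), mul_div_assoc', le_div_iff₀
            (Real.rpow_pos_of_pos (by linarith) _), mul_comm t]
          refine mul_le_mul_of_nonneg_left ?_ (Real.rpow_nonneg (abs_nonneg _) _)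
          calc Real.sqrt t ^ s ≤ Real.sqrt t ^ (2 : ℝ) := Real.rpow_le_rpow_of_exponent_le hr hs2
            _ = t := by rw [Real.rpow_two, hrt]
      nlinarith [mul_le_mul_of_nonneg_left h3 hc.le]
    · refine Eventually.of_forall fun u => ?_
      have h1 : Tendsto (fun t : ℝ => Complex.exp (-(Complex.I) * b * (u / Real.sqrt t : ℝ))) atTop
          (nhds 1) := by
        have h2 : Tendsto (fun t : ℝ => u / Real.sqrt t) atTop (nhds 0) :=
          Real.tendsto_sqrt_atTop.const_div_atTop u
        have h3 : Continuous fun x : ℝ => Complex.exp (-(Complex.I) * b * x) := by fun_prop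
        have h4 := (h3.tendsto 0).comp h2
        rw [Complex.ofReal_zero, mul_zero, Complex.exp_zero] at h4
        exact h4
      have h2 := h1.mul ((Complex.continuous_exp.tendsto _).comp (hQlim u))
      rw [one_mul] at h2
      have h4 : ((Real.exp (-(D / 2) * u ^ 2) : ℝ) : ℂ) = Complex.exp (-(D / 2 * u ^ 2 : ℝ)) := by
        rw [Complex.ofReal_exp]
        push_cast
        congr 1
        ring
      rw [h4]
      exact h2
  rw [integral_complex_ofReal, integral_gaussian] at hmain
  have hfin := hmain.const_mul (((1 / (2 * Real.pi) * Real.sqrt (2 * Real.pi * D) : ℝ) : ℂ))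
  have hone : (((1 / (2 * Real.pi) * Real.sqrt (2 * Real.pi * D) : ℝ) : ℂ)) *
      ((Real.sqrt (Real.pi / (D / 2)) : ℝ) : ℂ) = 1 := by
    rw [← Complex.ofReal_mul, mul_assoc, ← Real.sqrt_mul (by positivity),
      show 2 * Real.pi * D * (Real.pi / (D / 2)) = (2 * Real.pi) ^ 2 by field_simp,
      Real.sqrt_sq (by positivity)]
    rw [one_div_mul_cancel (by positivity), Complex.ofReal_one]
  rw [hone] at hfin
  refine hfin.congr' ?_
  filter_upwards [eventually_ge_atTop (1 : ℝ)] with t ht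
  have ht0 : 0 < t := by linarith
  -- contour shift
  have hshift := shift (fun w => Complex.exp (-b * w + t * PsiC σ m μ w)) lamStar hstar.2.le
    (fun y => Real.exp (|b| * |lamStar| + t * B) * Real.exp (-((t * c) * min (y ^ 2) (|y| ^ s))))
    (by
      have := hcont
      fun_prop)
    (by
      intro w hw
      have := (PsiC_deriv σ m μ hneg lamStar hstar.2.le hH w hw).differentiableAt
      exact DifferentiableAt.differentiableWithinAt (by fun_prop))
    (by
      intro a ha y
      rw [Complex.norm_exp, ← Real.exp_add, Complex.add_re, Complex.re_ofReal_mul]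
      refine Real.exp_le_exp.2 ?_
      have h1 : (-(b : ℂ) * (a + y * Complex.I)).re = -b * a := by simp
      have h2 : -b * a ≤ |b| * |lamStar| := by
        calc -b * a ≤ |-b * a| := le_abs_self _
          _ = |b| * |a| := by rw [abs_mul, abs_neg]
          _ ≤ _ := by
            refine mul_le_mul_of_nonneg_left ?_ (abs_nonneg _)
            rw [abs_of_nonpos ha.2, abs_of_neg hstar.2]
            linarith [ha.1]
      have h3 := hre a ha y
      have h4 := (Complex.re_le_norm _).trans (hB a ha)
      rw [h1]
      nlinarith [mul_le_mul_of_nonneg_left h3 ht0.le, mul_le_mul_of_nonneg_left h4 ht0.le])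
    ((gbound_int (t * c) s (by positivity) hs0).const_mul _)
    (by
      have h1 := (gbound_tendsto (t * c) s (by positivity) hs0).const_mul
        (Real.exp (|b| * |lamStar| + t * B))
      rw [mul_zero] at h1
      exact h1)
    (by intro y; simp)
  have hL : fourierDensity σ m ν t b = ((1 / (2 * Real.pi) : ℝ) : ℂ) *
      ((Real.exp (-(lamStar * b - cumulant σ m ν lamStar * t)) : ℝ) : ℂ) *
      ∫ lam : ℝ, Complex.exp (-(Complex.I) * b * lam) * Complex.exp ((t : ℂ) * Q lam) := by
    unfold fourierDensity
    rw [mul_assoc]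
    congr 1
    rw [← integral_const_mul]
    calc _ = _ := by
          refine integral_congr_ae (Eventually.of_forall fun lam => ?_)
          simp only [PsiC_char]
          rw [← Complex.exp_add]
          congr 1
          push_cast
          ring
      _ = _ := hshift
      _ = _ := by
          refine integral_congr_ae (Eventually.of_forall fun lam => ?_)
          simp only [hQ, hμ, PsiC_real, Complex.ofReal_exp]
          rw [← Complex.exp_add, ← Complex.exp_add]
          congr 1
          push_cast
          ring
  have hscale := Measure.integral_comp_div (fun lam : ℝ => Complex.exp (-(Complex.I) * b * lam) *
    Complex.exp ((t : ℂ) * Q lam)) (Real.sqrt t)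
  rw [hscale, hL, abs_of_nonneg (Real.sqrt_nonneg _), Complex.real_smul, Real.exp_neg,
    Real.sqrt_mul (by positivity : 0 ≤ 2 * Real.pi * D)]
  have hE : ((Real.exp (lamStar * b - cumulant σ m ν lamStar * t) : ℝ) : ℂ) ≠ 0 := by
    exact_mod_cast (Real.exp_pos _).ne'
  rw [Complex.ofReal_inv]
  push_cast at hE ⊢
  field_simp
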